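/- arXiv:1712.04730 — 7 statements merged into one kernel-verified Lean document; each statement's English description precedes it below -/
import Mathlib

section
/- For every integer n ≥ 1, every real ψ with 0 < ψ < 1 and every real ω > 0, one has Σ_{y=0}^{n} y · C(n,y) ψ^y (1−ψ)^{n−y} ω^{(n−y)y} = n ψ K_{n,1}(ψ,ω); equivalently, the mean of the (L)MBD(ψ,ω) satisfies E_{n,ψ,ω} = n ψ τ_1(ψ,ω). -/
open Filter Finset

/-- `K n a ψ ω = Σ_{i=0}^{n−a} C(n−a,i) ψ^i (1−ψ)^{n−a−i} ω^{(n−a−i)(i+a)}`. -/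
noncomputable def K (n a : ℕ) (ψ ω : ℝ) : ℝ :=
  ∑ i ∈ Finset.range (n - a + 1),
    (Nat.choose (n - a) i : ℝ) * ψ ^ i * (1 - ψ) ^ (n - a - i) * ω ^ ((n - a - i) * (i + a))

/-- `τ j = K n j / K n 0`. -/
noncomputable def τ (n j : ℕ) (ψ ω : ℝ) : ℝ := K n j ψ ω / K n 0 ψ ω

/-- pmf of the (L)MBD. -/
noncomputable def lmbd (n : ℕ) (ψ ω : ℝ) (y : ℕ) : ℝ :=
  (Nat.choose n y : ℝ) * ψ ^ y * (1 - ψ) ^ (n - y) * ω ^ ((n - y) * y) / K n 0 ψ ω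

/-- mean of the (L)MBD. -/
noncomputable def lmbdMean (n : ℕ) (ψ ω : ℝ) : ℝ :=
  ∑ y ∈ Finset.range (n + 1), (y : ℝ) * lmbd n ψ ω y

/-- variance of the (L)MBD. -/
noncomputable def lmbdVar (n : ℕ) (ψ ω : ℝ) : ℝ :=
  ∑ y ∈ Finset.range (n + 1), ((y : ℝ) - lmbdMean n ψ ω) ^ 2 * lmbd n ψ ω y

/-!
Weighting by the falling factorial `y (y − 1) ⋯ (y − a + 1)` turns `C(n, y)` into
`n (n − 1) ⋯ (n − a + 1) · C(n − a, y − a)`, so after the shift `y = i + a` the `a`-th factorial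
moment of the unnormalized mass function is `K n a` up to a constant. The mean is the case `a = 1`,
divided by `K n 0`.
-/

theorem descFactorial_mul_choose_add (n a i : ℕ) :
    (i + a).descFactorial a * n.choose (i + a) = n.descFactorial a * (n - a).choose i := by
  have absorption : n.choose (i + a) * (i + a).choose a = n.choose a * (n - a).choose i := by
    simpa only [Nat.add_sub_cancel] using Nat.choose_mul (Nat.le_add_left a i)
  calc
    (i + a).descFactorial a * n.choose (i + a)
        = a.factorial * (n.choose (i + a) * (i + a).choose a) := by
      rw [Nat.descFactorial_eq_factorial_mul_choose]; ring
    _ = n.descFactorial a * (n - a).choose i := by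
      rw [absorption, Nat.descFactorial_eq_factorial_mul_choose, mul_assoc]

theorem sum_descFactorial_mul_choose_nsmul {M : Type*} [AddCommMonoid M] {n a : ℕ} (ha : a ≤ n)
    (f : ℕ → M) :
    ∑ y ∈ range (n + 1), (y.descFactorial a * n.choose y) • f y =
      n.descFactorial a • ∑ i ∈ range (n - a + 1), (n - a).choose i • f (i + a) := by
  have initial_terms_vanish :
      ∑ y ∈ range a, (y.descFactorial a * n.choose y) • f y = 0 :=
    sum_eq_zero fun y hy => by
      rw [Nat.descFactorial_of_lt (mem_range.mp hy), zero_mul, zero_smul]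
  rw [show n + 1 = a + (n - a + 1) by lia, sum_range_add, initial_terms_vanish, zero_add, smul_sum]
  refine sum_congr rfl fun i _ => ?_
  rw [add_comm a i, descFactorial_mul_choose_add, mul_smul]

theorem sum_descFactorial_mul_eq_mul_K {n a : ℕ} (ha : a ≤ n) (ψ ω : ℝ) :
    ∑ y ∈ range (n + 1), (y.descFactorial a : ℝ) *
        ((n.choose y : ℝ) * ψ ^ y * (1 - ψ) ^ (n - y) * ω ^ ((n - y) * y)) =
      (n.descFactorial a : ℝ) * ψ ^ a * K n a ψ ω :=
  calc
    _ = ∑ y ∈ range (n + 1), (y.descFactorial a * n.choose y) •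
          (ψ ^ y * (1 - ψ) ^ (n - y) * ω ^ ((n - y) * y)) :=
      sum_congr rfl fun y _ => by rw [nsmul_eq_mul]; push_cast; ring
    _ = n.descFactorial a • ∑ i ∈ range (n - a + 1), (n - a).choose i •
          (ψ ^ (i + a) * (1 - ψ) ^ (n - (i + a)) * ω ^ ((n - (i + a)) * (i + a))) :=
      sum_descFactorial_mul_choose_nsmul ha _
    _ = (n.descFactorial a : ℝ) * ψ ^ a * K n a ψ ω := by
      rw [K, nsmul_eq_mul, mul_assoc, mul_sum _ _ (ψ ^ a)]
      congr 1
      refine sum_congr rfl fun i _ => ?_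
      rw [nsmul_eq_mul, show n - (i + a) = n - a - i by lia]
      ring

theorem K_pos (n a : ℕ) {ψ ω : ℝ} (hψ0 : 0 < ψ) (hψ1 : ψ < 1) (hω : 0 < ω) :
    0 < K n a ψ ω := by
  refine sum_pos (fun i hi => ?_) nonempty_range_add_one
  have : 0 < (n - a).choose i := Nat.choose_pos (mem_range_succ_iff.mp hi)
  have : 0 < 1 - ψ := sub_pos.mpr hψ1
  positivity

theorem lmbdMean_mul_K {n : ℕ} {ψ ω : ℝ} (hK : K n 0 ψ ω ≠ 0) :
    lmbdMean n ψ ω * K n 0 ψ ω =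
      ∑ y ∈ range (n + 1),
        (y : ℝ) * ((n.choose y : ℝ) * ψ ^ y * (1 - ψ) ^ (n - y) * ω ^ ((n - y) * y)) := by
  rw [lmbdMean, sum_mul]
  exact sum_congr rfl fun y _ => by rw [lmbd, mul_assoc, div_mul_cancel₀ _ hK]

theorem stmt_0_general {n : ℕ} (hn : 1 ≤ n) (ψ ω : ℝ) :
    ∑ y ∈ range (n + 1),
        (y : ℝ) * ((n.choose y : ℝ) * ψ ^ y * (1 - ψ) ^ (n - y) * ω ^ ((n - y) * y)) =
      (n : ℝ) * ψ * K n 1 ψ ω ∧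
    (K n 0 ψ ω ≠ 0 → lmbdMean n ψ ω = (n : ℝ) * ψ * τ n 1 ψ ω) := by
  have first_moment := sum_descFactorial_mul_eq_mul_K hn ψ ω
  simp only [Nat.descFactorial_one, pow_one] at first_moment
  refine ⟨first_moment, fun hK => ?_⟩
  rw [τ, ← mul_div_assoc, eq_div_iff hK, lmbdMean_mul_K hK, first_moment]

theorem stmt_0 (n : ℕ) (hn : 1 ≤ n) (ψ : ℝ) (hψ0 : 0 < ψ) (hψ1 : ψ < 1)
    (ω : ℝ) (hω : 0 < ω) :
    (∑ y ∈ Finset.range (n + 1),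
        (y : ℝ) * ((Nat.choose n y : ℝ) * ψ ^ y * (1 - ψ) ^ (n - y) * ω ^ ((n - y) * y)))
      = (n : ℝ) * ψ * K n 1 ψ ω ∧
    lmbdMean n ψ ω = (n : ℝ) * ψ * τ n 1 ψ ω := by
  obtain ⟨first_moment, mean_eq⟩ := stmt_0_general hn ψ ω
  exact ⟨first_moment, mean_eq (K_pos n 0 hψ0 hψ1 hω).ne'⟩
end

section
/- Fix an integer n ≥ 1 and a real ψ with 0 < ψ < 1. Then, as ω → 0 from the right: p_{n,ψ,ω}(0) tends to (1−ψ)^n/(ψ^n+(1−ψ)^n), p_{n,ψ,ω}(n) tends to ψ^n/(ψ^n+(1−ψ)^n), and for every integer y with 0 < y < n, p_{n,ψ,ω}(y) tends to 0. -/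
open Filter Finset

/-!
The exponent `(n - y) * y` is nonzero exactly for `0 < y < n`. Hence the pmf is a rational function
of `ω` whose numerator vanishes at `ω = 0` unless `y` is `0` or `n`, and whose denominator takes the
value `ψ ^ n + (1 - ψ) ^ n` there. This value is nonzero because the two bases are not opposite, so
the limits are obtained by evaluating at `ω = 0`.
-/

theorem pow_add_pow_ne_zero_of_add_ne_zero {R : Type*} [Ring R] [LinearOrder R]
    [IsStrictOrderedRing R] {x y : R} (h : x + y ≠ 0) (n : ℕ) : x ^ n + y ^ n ≠ 0 := by
  rcases eq_or_ne y 0 with rfl | hy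
  · have hx : x ≠ 0 := by simpa only [add_zero] using h
    rcases eq_or_ne n 0 with rfl | hn
    · simp
    · simpa only [zero_pow hn, add_zero] using pow_ne_zero n hx
  · intro hxy
    have hpow : x ^ n = -y ^ n := eq_neg_of_add_eq_zero_left hxy
    exact h (add_eq_zero_iff_eq_neg.2 ((pow_eq_neg_pow_iff hy).1 hpow).1)

section

variable {n y : ℕ} (ψ : ℝ)

theorem nat_sub_mul_self_ne_zero (hy0 : 0 < y) (hyn : y < n) : (n - y) * y ≠ 0 :=
  Nat.mul_ne_zero (Nat.sub_ne_zero_of_lt hyn) hy0.ne'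

theorem K_zero_zero (hn : 1 ≤ n) : K n 0 ψ 0 = ψ ^ n + (1 - ψ) ^ n := by
  have interior_eq_zero : ∀ i ∈ range (n + 1), i ≠ n ∧ i ≠ 0 →
      (n.choose i : ℝ) * ψ ^ i * (1 - ψ) ^ (n - i) * 0 ^ ((n - i) * i) = 0 := by
    rintro i hi ⟨hin, hi0⟩
    have hlt : i < n := (mem_range_succ_iff.1 hi).lt_of_ne hin
    rw [zero_pow (nat_sub_mul_self_ne_zero (pos_of_ne_zero hi0) hlt), mul_zero]
  simp only [K, Nat.sub_zero, Nat.add_zero]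
  rw [sum_eq_add_of_mem n 0 (by simp) (by simp) (by lia) interior_eq_zero]
  simp

theorem K_zero_zero_ne_zero (hn : 1 ≤ n) : K n 0 ψ 0 ≠ 0 := by
  rw [K_zero_zero ψ hn]
  exact pow_add_pow_ne_zero_of_add_ne_zero (by simp) n

theorem lmbd_zero_zero (hn : 1 ≤ n) :
    lmbd n ψ 0 0 = (1 - ψ) ^ n / (ψ ^ n + (1 - ψ) ^ n) := by
  simp [lmbd, K_zero_zero ψ hn]

theorem lmbd_zero_self (hn : 1 ≤ n) : lmbd n ψ 0 n = ψ ^ n / (ψ ^ n + (1 - ψ) ^ n) := by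
  simp [lmbd, K_zero_zero ψ hn]

theorem lmbd_zero_of_pos_of_lt (hy0 : 0 < y) (hyn : y < n) : lmbd n ψ 0 y = 0 := by
  rw [lmbd, zero_pow (nat_sub_mul_self_ne_zero hy0 hyn), mul_zero, zero_div]

theorem continuous_K (n a : ℕ) : Continuous (K n a ψ) := by
  unfold K
  fun_prop

theorem continuousAt_lmbd (y : ℕ) {ω : ℝ} (hK : K n 0 ψ ω ≠ 0) :
    ContinuousAt (fun ω => lmbd n ψ ω y) ω :=
  ContinuousAt.div (by fun_prop) (continuous_K ψ n 0).continuousAt hK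

end

theorem stmt_3_general (n : ℕ) (hn : 1 ≤ n) (ψ : ℝ) :
    Tendsto (fun ω : ℝ => lmbd n ψ ω 0) (nhds 0)
      (nhds ((1 - ψ) ^ n / (ψ ^ n + (1 - ψ) ^ n))) ∧
    Tendsto (fun ω : ℝ => lmbd n ψ ω n) (nhds 0)
      (nhds (ψ ^ n / (ψ ^ n + (1 - ψ) ^ n))) ∧
    ∀ y : ℕ, 0 < y → y < n → Tendsto (fun ω : ℝ => lmbd n ψ ω y) (nhds 0) (nhds 0) := by
  have tendsto_lmbd (y : ℕ) : Tendsto (fun ω => lmbd n ψ ω y) (nhds 0) (nhds (lmbd n ψ 0 y)) :=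
    continuousAt_lmbd ψ y (K_zero_zero_ne_zero ψ hn)
  refine ⟨?_, ?_, fun y hy0 hyn => ?_⟩
  · simpa only [lmbd_zero_zero ψ hn] using tendsto_lmbd 0
  · simpa only [lmbd_zero_self ψ hn] using tendsto_lmbd n
  · simpa only [lmbd_zero_of_pos_of_lt ψ hy0 hyn] using tendsto_lmbd y

theorem stmt_3 (n : ℕ) (hn : 1 ≤ n) (ψ : ℝ) (hψ0 : 0 < ψ) (hψ1 : ψ < 1) :
    Filter.Tendsto (fun ω : ℝ => lmbd n ψ ω 0) (nhdsWithin 0 (Set.Ioi 0))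
      (nhds ((1 - ψ) ^ n / (ψ ^ n + (1 - ψ) ^ n))) ∧
    Filter.Tendsto (fun ω : ℝ => lmbd n ψ ω n) (nhdsWithin 0 (Set.Ioi 0))
      (nhds (ψ ^ n / (ψ ^ n + (1 - ψ) ^ n))) ∧
    ∀ y : ℕ, 0 < y → y < n →
      Filter.Tendsto (fun ω : ℝ => lmbd n ψ ω y) (nhdsWithin 0 (Set.Ioi 0)) (nhds 0) := by
  obtain ⟨hleft, hright, hmid⟩ := stmt_3_general n hn ψ
  exact ⟨hleft.mono_left nhdsWithin_le_nhds, hright.mono_left nhdsWithin_le_nhds,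
    fun y hy0 hyn => (hmid y hy0 hyn).mono_left nhdsWithin_le_nhds⟩
end

section
/- Let n ≥ 2 be an even integer, let j be an integer with 1 ≤ j ≤ n/2, and let ψ be a real with 0 < ψ < 1. Then, as ω → +∞, τ_j(ψ,ω) tends to (1/ψ^j) · C(n−j, n/2 − j) / C(n, n/2). -/
open Filter Finset

/-!
By AM-GM `(2 * m - k) * k < m ^ 2` for every `k ≠ m`, so the polynomial `ω ↦ K (2 * m) a ψ ω` with
`a ≤ m` has degree `m ^ 2`, and only the summand with `i + a = m` contributes to its leading
coefficient. Hence `τ (2 * m) j ψ ω` tends to a quotient of two leading coefficients, in which the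
factors `(1 - ψ) ^ m` cancel.
-/

open scoped Topology

theorem four_mul_lt_sq_add_of_ne {R : Type*} [CommSemiring R] [LinearOrder R]
    [IsStrictOrderedRing R] [ExistsAddOfLE R] {a b : R} (hab : a ≠ b) :
    4 * a * b < (a + b) ^ 2 := by
  wlog h : a < b generalizing a b
  · simpa only [mul_right_comm, add_comm] using this hab.symm (hab.lt_or_gt.resolve_left h)
  obtain ⟨d, hd, rfl⟩ := exists_pos_add_of_lt' h
  calc 4 * a * (a + d) < 4 * a * (a + d) + d ^ 2 := lt_add_of_pos_right _ (pow_pos hd 2)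
    _ = (a + (a + d)) ^ 2 := by ring

theorem tendsto_sum_mul_pow_div_pow_atTop {ι 𝕜 : Type*} [Field 𝕜] [LinearOrder 𝕜]
    [IsStrictOrderedRing 𝕜] [TopologicalSpace 𝕜] [OrderTopology 𝕜] {s : Finset ι} {i₀ : ι}
    (hi₀ : i₀ ∈ s) (c : ι → 𝕜) {e : ι → ℕ} (he : ∀ i ∈ s, i ≠ i₀ → e i < e i₀) :
    Tendsto (fun x : 𝕜 => (∑ i ∈ s, c i * x ^ e i) / x ^ e i₀) atTop (𝓝 (c i₀)) := by
  classical
  have hterm : ∀ i ∈ s, Tendsto (fun x : 𝕜 => c i * (x ^ e i / x ^ e i₀)) atTop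
      (𝓝 (if i = i₀ then c i₀ else 0)) := by
    intro i hi
    split_ifs with h
    · subst h
      refine tendsto_const_nhds.congr' ?_
      filter_upwards [eventually_ne_atTop 0] with x hx
      rw [div_self (pow_ne_zero _ hx), mul_one]
    · simpa only [mul_zero] using
        (tendsto_pow_div_pow_atTop_zero (he i hi h)).const_mul (c i)
  simpa only [sum_ite_eq', if_pos hi₀, sum_div, mul_div_assoc] using tendsto_finsetSum s hterm

theorem tendsto_K_div_pow_atTop {m a : ℕ} (ha : a ≤ m) (ψ : ℝ) :
    Tendsto (fun ω : ℝ => K (2 * m) a ψ ω / ω ^ m ^ 2) atTop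
      (𝓝 ((2 * m - a).choose (m - a) * ψ ^ (m - a) * (1 - ψ) ^ m)) := by
  have hmem : m - a ∈ range (2 * m - a + 1) := mem_range.mpr (by omega)
  have hleft : 2 * m - a - (m - a) = m := by omega
  have hlt : ∀ i ∈ range (2 * m - a + 1), i ≠ m - a →
      (2 * m - a - i) * (i + a) < (2 * m - a - (m - a)) * (m - a + a) := by
    intro i hi hne
    rw [mem_range] at hi
    have hsum : 2 * m - a - i + (i + a) = 2 * m := by omega
    have hamgm := four_mul_lt_sq_add_of_ne (show 2 * m - a - i ≠ i + a by omega)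
    rw [hsum] at hamgm
    rw [hleft, Nat.sub_add_cancel ha]
    linarith
  have hlim := tendsto_sum_mul_pow_div_pow_atTop hmem
    (fun i => ((2 * m - a).choose i : ℝ) * ψ ^ i * (1 - ψ) ^ (2 * m - a - i)) hlt
  simpa only [K, hleft, Nat.sub_add_cancel ha, ← sq] using hlim

theorem stmt_8_general (n : ℕ) (hne : Even n) (j : ℕ) (hj : j ≤ n / 2) (ψ : ℝ) (hψ0 : ψ ≠ 0)
    (hψ1 : ψ ≠ 1) :
    Tendsto (fun ω : ℝ => τ n j ψ ω) atTop
      (𝓝 ((1 / ψ ^ j) * ((n - j).choose (n / 2 - j) : ℝ) / (n.choose (n / 2) : ℝ))) := by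
  obtain ⟨m, rfl⟩ := even_iff_exists_two_mul.mp hne
  rw [Nat.mul_div_cancel_left m two_pos] at hj ⊢
  have hψ : 1 - ψ ≠ 0 := sub_ne_zero.mpr hψ1.symm
  have hchoose : ((2 * m).choose m : ℝ) ≠ 0 :=
    Nat.cast_ne_zero.mpr (Nat.choose_pos (by omega)).ne'
  have hnum := tendsto_K_div_pow_atTop hj ψ
  have hden : Tendsto (fun ω : ℝ => K (2 * m) 0 ψ ω / ω ^ m ^ 2) atTop
      (𝓝 ((2 * m).choose m * ψ ^ m * (1 - ψ) ^ m)) := tendsto_K_div_pow_atTop m.zero_le ψ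
  have hquot := hnum.div hden
    (mul_ne_zero (mul_ne_zero hchoose (pow_ne_zero m hψ0)) (pow_ne_zero m hψ))
  have hvalue : ((2 * m - j).choose (m - j) * ψ ^ (m - j) * (1 - ψ) ^ m : ℝ) /
      ((2 * m).choose m * ψ ^ m * (1 - ψ) ^ m) =
      1 / ψ ^ j * (2 * m - j).choose (m - j) / (2 * m).choose m := by
    rw [← pow_sub_mul_pow ψ hj]
    field_simp
  rw [hvalue] at hquot
  refine hquot.congr' ?_
  filter_upwards [eventually_ne_atTop 0] with ω hω
  exact div_div_div_cancel_right₀ (pow_ne_zero _ hω) _ _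

theorem stmt_8 (n : ℕ) (hn : 2 ≤ n) (hne : Even n) (j : ℕ) (hj1 : 1 ≤ j) (hj : j ≤ n / 2)
    (ψ : ℝ) (hψ0 : 0 < ψ) (hψ1 : ψ < 1) :
    Filter.Tendsto (fun ω : ℝ => τ n j ψ ω) Filter.atTop
      (nhds ((1 / ψ ^ j) * (Nat.choose (n - j) (n / 2 - j) : ℝ) / (Nat.choose n (n / 2) : ℝ))) := by
  exact stmt_8_general n hne j hj ψ hψ0.ne' hψ1.ne
end

section
/- Let n ≥ 2 be an even integer and let ψ be a real with 0 < ψ < 1. Then for every integer y with 0 ≤ y ≤ n, as ω → +∞, p_{n,ψ,ω}(y) tends to 1 if y = n/2 and to 0 otherwise; that is, the (L)MBD(ψ,ω) converges in distribution to the Dirac measure concentrated at n/2 as ω → +∞. -/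
open Filter Finset

/-! The probability of `y` is a single monomial in `ω` divided by a sum of monomials. Dividing both
by the highest power of `ω` that occurs, only the terms of top degree survive in the limit. The
degree `(n - i) * i` is largest exactly at `i = n / 2` when `n` is even, so all the mass ends up
there. -/

section MonomialQuotients

variable {𝕜 ι : Type*} [Field 𝕜] [LinearOrder 𝕜] [IsStrictOrderedRing 𝕜] [TopologicalSpace 𝕜]
  [OrderTopology 𝕜] {s : Finset ι} {c : ι → 𝕜} {e : ι → ℕ} {d : ℕ}

lemma tendsto_pow_div_pow_atTop_ite {a b : ℕ} (hab : a ≤ b) :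
    Tendsto (fun x : 𝕜 => x ^ a / x ^ b) atTop (nhds (if a = b then 1 else 0)) := by
  rcases hab.eq_or_lt with rfl | hlt
  · rw [if_pos rfl]
    refine tendsto_const_nhds.congr' ?_
    filter_upwards [eventually_ne_atTop 0] with x hx
    exact (div_self (pow_ne_zero a hx)).symm
  · rw [if_neg hlt.ne]
    exact tendsto_pow_div_pow_atTop_zero hlt

lemma tendsto_monomial_div_pow_atTop (a : 𝕜) {k : ℕ} (hk : k ≤ d) :
    Tendsto (fun x : 𝕜 => a * x ^ k / x ^ d) atTop (nhds (if k = d then a else 0)) := by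
  simpa only [mul_div_assoc, mul_ite, mul_one, mul_zero] using
    (tendsto_pow_div_pow_atTop_ite hk).const_mul a

lemma tendsto_sum_monomial_div_pow_atTop (he : ∀ i ∈ s, e i ≤ d) :
    Tendsto (fun x : 𝕜 => (∑ i ∈ s, c i * x ^ e i) / x ^ d) atTop
      (nhds (∑ i ∈ s with e i = d, c i)) := by
  simp only [sum_div, sum_filter]
  exact tendsto_finsetSum s fun i hi => tendsto_monomial_div_pow_atTop (c i) (he i hi)

lemma tendsto_monomial_div_sum_monomial_atTop (he : ∀ i ∈ s, e i ≤ d)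
    (hc : ∑ i ∈ s with e i = d, c i ≠ 0) {y : ι} (hy : y ∈ s) :
    Tendsto (fun x : 𝕜 => c y * x ^ e y / ∑ i ∈ s, c i * x ^ e i) atTop
      (nhds ((if e y = d then c y else 0) / ∑ i ∈ s with e i = d, c i)) := by
  refine ((tendsto_monomial_div_pow_atTop (c y) (he y hy)).div
    (tendsto_sum_monomial_div_pow_atTop he) hc).congr' ?_
  filter_upwards [eventually_ne_atTop 0] with x hx
  exact div_div_div_cancel_right₀ (pow_ne_zero d hx) _ _

lemma tendsto_monomial_div_sum_monomial_atTop_of_unique_max [DecidableEq ι] {m : ι} (hm : m ∈ s)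
    (hc : c m ≠ 0) (he : ∀ i ∈ s, i ≠ m → e i < e m) {y : ι} (hy : y ∈ s) :
    Tendsto (fun x : 𝕜 => c y * x ^ e y / ∑ i ∈ s, c i * x ^ e i) atTop
      (nhds (if y = m then 1 else 0)) := by
  have he_eq_iff : ∀ i ∈ s, e i = e m ↔ i = m := fun i hi =>
    ⟨fun h => by_contra fun hne => (he i hi hne).ne h, congrArg e⟩
  have he_le : ∀ i ∈ s, e i ≤ e m := fun i hi =>
    (eq_or_ne i m).elim (fun h => (congrArg e h).le) fun hne => (he i hi hne).le
  have hsum : ∑ i ∈ s with e i = e m, c i = c m := by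
    rw [filter_congr he_eq_iff, filter_eq', if_pos hm, sum_singleton]
  have hlim := tendsto_monomial_div_sum_monomial_atTop he_le (hsum ▸ hc) hy
  rw [hsum] at hlim
  convert hlim using 2
  by_cases h : y = m <;> simp [he_eq_iff y hy, h, hc]

end MonomialQuotients

lemma mul_lt_mul_self_of_add_eq_add_self {R : Type*} [CommRing R] [LinearOrder R]
    [IsStrictOrderedRing R] {a b k : R} (hsum : a + b = k + k) (hne : a ≠ k) : a * b < k * k := by
  have hsq : 0 < (a - k) ^ 2 := sq_pos_of_ne_zero (sub_ne_zero.mpr hne)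
  have hdiff : k * k - a * b = (a - k) ^ 2 := by linear_combination -a * hsum
  exact sub_pos.mp (hdiff ▸ hsq)

lemma sub_mul_self_lt_of_ne_half {n i : ℕ} (hn : Even n) (hi : i ≤ n) (h : i ≠ n / 2) :
    (n - i) * i < (n - n / 2) * (n / 2) := by
  have hhalf : n - n / 2 = n / 2 := by grind
  have hsum : i + (n - i) = n / 2 + n / 2 := by omega
  rw [hhalf, mul_comm (n - i)]
  zify at hsum h ⊢
  exact mul_lt_mul_self_of_add_eq_add_self hsum h

/-- The `Binomial(n, ψ)` weight of `i`: the coefficient of `ω ^ ((n - i) * i)` contributed by the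
value `i` to the normalizing constant `K n 0 ψ ω`. -/
def binomialWeight (n : ℕ) (ψ : ℝ) (i : ℕ) : ℝ :=
  (Nat.choose n i : ℝ) * ψ ^ i * (1 - ψ) ^ (n - i)

lemma binomialWeight_ne_zero {n i : ℕ} {ψ : ℝ} (hi : i ≤ n) (hψ0 : ψ ≠ 0) (hψ1 : ψ ≠ 1) :
    binomialWeight n ψ i ≠ 0 :=
  mul_ne_zero
    (mul_ne_zero (Nat.cast_ne_zero.mpr (Nat.choose_pos hi).ne') (pow_ne_zero i hψ0))
    (pow_ne_zero (n - i) (sub_ne_zero.mpr hψ1.symm))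

lemma lmbd_eq_binomialWeight_mul_pow_div_sum (n : ℕ) (ψ ω : ℝ) (y : ℕ) :
    lmbd n ψ ω y = binomialWeight n ψ y * ω ^ ((n - y) * y) /
      ∑ i ∈ range (n + 1), binomialWeight n ψ i * ω ^ ((n - i) * i) := rfl

theorem stmt_9_general (n : ℕ) (hne : Even n) (ψ : ℝ) (hψ0 : ψ ≠ 0) (hψ1 : ψ ≠ 1) :
    ∀ y : ℕ, y ≤ n →
      Tendsto (fun ω : ℝ => lmbd n ψ ω y) atTop (nhds (if y = n / 2 then 1 else 0)) := by
  intro y hy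
  have hhalf : n / 2 ≤ n := Nat.div_le_self n 2
  simp only [lmbd_eq_binomialWeight_mul_pow_div_sum]
  exact tendsto_monomial_div_sum_monomial_atTop_of_unique_max (e := fun i => (n - i) * i)
    (mem_range_succ_iff.mpr hhalf) (binomialWeight_ne_zero hhalf hψ0 hψ1)
    (fun i hi => sub_mul_self_lt_of_ne_half hne (mem_range_succ_iff.mp hi))
    (mem_range_succ_iff.mpr hy)

theorem stmt_9 (n : ℕ) (hn : 2 ≤ n) (hne : Even n)
    (ψ : ℝ) (hψ0 : 0 < ψ) (hψ1 : ψ < 1) :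
    ∀ y : ℕ, y ≤ n →
      Filter.Tendsto (fun ω : ℝ => lmbd n ψ ω y) Filter.atTop
        (nhds (if y = n / 2 then 1 else 0)) :=
  stmt_9_general n hne ψ hψ0.ne' hψ1.ne
end

section
/- Let n ≥ 2 be an even integer and let ψ be a real with 0 < ψ < 1. Then, as ω → +∞, the mean E_{n,ψ,ω} of the (L)MBD(ψ,ω) tends to n/2 and its variance V_{n,ψ,ω} tends to 0. -/
open Filter Finset

/-!
For `n = 2 * m` the exponent `(n - y) * y` of `ω` has a strict maximum over `y` at `m`, so as
`ω → ∞` the weight of `m` dominates all the others and the distribution concentrates at `m`. Hence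
the expectation of any function tends to its value at `m`, even if the function varies with `ω` and
only its pointwise limit is known. The mean is the expectation of `y`, and the variance is that of
`(y - mean)²`, whose value at `m` tends to `0`.
-/

section Concentration

open Asymptotics Topology

variable {ι α : Type*} {l : Filter α} {s : Finset ι} {j : ι}

lemma isEquivalent_sum_of_isLittleO {E : Type*} [NormedAddCommGroup E] {w : ι → α → E}
    (hj : j ∈ s) (hw : ∀ i ∈ s, i ≠ j → w i =o[l] w j) :
    (fun x => ∑ i ∈ s, w i x) ~[l] w j := by
  classical
  have hrest : (fun x => ∑ i ∈ s.erase j, w i x) =o[l] w j :=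
    IsLittleO.fun_sum fun i hi => hw i (mem_of_mem_erase hi) (ne_of_mem_erase hi)
  refine (hrest.add_isEquivalent .refl).congr_left (.of_forall fun x => ?_)
  exact sum_erase_add s (fun i => w i x) hj

variable {𝕜 : Type*} [NormedField 𝕜] {w : ι → α → 𝕜}

lemma tendsto_div_sum_zero_of_isLittleO {i : ι} (hj : j ∈ s)
    (hw : ∀ i ∈ s, i ≠ j → w i =o[l] w j) (hi : i ∈ s) (hij : i ≠ j) :
    Tendsto (fun x => w i x / ∑ k ∈ s, w k x) l (𝓝 0) :=
  ((hw i hi hij).trans_isBigO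
    (isEquivalent_sum_of_isLittleO hj hw).symm.isBigO).tendsto_div_nhds_zero

lemma tendsto_div_sum_one_of_isLittleO (hj : j ∈ s) (hw : ∀ i ∈ s, i ≠ j → w i =o[l] w j)
    (hj0 : ∀ᶠ x in l, w j x ≠ 0) :
    Tendsto (fun x => w j x / ∑ k ∈ s, w k x) l (𝓝 1) := by
  have h := (isEquivalent_iff_tendsto_one hj0).mp (isEquivalent_sum_of_isLittleO hj hw)
  simpa using h.inv₀ one_ne_zero

theorem tendsto_centerMass_of_isLittleO {E : Type*} [AddCommGroup E] [Module 𝕜 E]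
    [TopologicalSpace E] [ContinuousAdd E] [ContinuousSMul 𝕜 E] {z : ι → α → E} {c : ι → E}
    (hj : j ∈ s) (hw : ∀ i ∈ s, i ≠ j → w i =o[l] w j) (hj0 : ∀ᶠ x in l, w j x ≠ 0)
    (hz : ∀ i ∈ s, Tendsto (z i) l (𝓝 (c i))) :
    Tendsto (fun x => s.centerMass (fun i => w i x) (fun i => z i x)) l (𝓝 (c j)) := by
  classical
  have hterm : ∀ i ∈ s, Tendsto (fun x => (w i x / ∑ k ∈ s, w k x) • z i x) l
      (𝓝 (if i = j then c i else 0)) := by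
    intro i hi
    split_ifs with hij
    · subst hij
      simpa using (tendsto_div_sum_one_of_isLittleO hi hw hj0).smul (hz i hi)
    · simpa using (tendsto_div_sum_zero_of_isLittleO hj hw hi hij).smul (hz i hi)
  simpa [centerMass, smul_sum, smul_smul, div_eq_inv_mul, hj] using tendsto_finsetSum s hterm

end Concentration

section LMBD

open Asymptotics Topology

/-- The unnormalized mass at `y` of the (L)MBD, whose normalizing constant is `K n 0 ψ ω`. -/
noncomputable def lmbdWeight (n : ℕ) (ψ ω : ℝ) (y : ℕ) : ℝ :=
  (n.choose y : ℝ) * ψ ^ y * (1 - ψ) ^ (n - y) * ω ^ ((n - y) * y)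

lemma sum_lmbdWeight (n : ℕ) (ψ ω : ℝ) : ∑ y ∈ range (n + 1), lmbdWeight n ψ ω y = K n 0 ψ ω :=
  rfl

lemma sum_mul_lmbd_eq_centerMass (n : ℕ) (ψ ω : ℝ) (f : ℕ → ℝ) :
    ∑ y ∈ range (n + 1), f y * lmbd n ψ ω y =
      (range (n + 1)).centerMass (lmbdWeight n ψ ω) f := by
  rw [centerMass, sum_lmbdWeight, smul_eq_mul, mul_sum]
  refine sum_congr rfl fun y _ => ?_
  rw [lmbd, lmbdWeight, smul_eq_mul]
  ring

variable {m : ℕ} {ψ : ℝ}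

lemma two_mul_sub_mul_lt_mul_self {y : ℕ} (hy : y ≤ 2 * m) (hym : y ≠ m) :
    (2 * m - y) * y < m * m := by
  have hsq : 0 < ((y : ℤ) - m) ^ 2 := sq_pos_of_ne_zero (sub_ne_zero.mpr (mod_cast hym))
  zify [hy]
  linarith

lemma choose_mul_pow_mul_pow_ne_zero {n y : ℕ} (hy : y ≤ n) (hψ0 : ψ ≠ 0) (hψ1 : ψ ≠ 1) :
    (n.choose y : ℝ) * ψ ^ y * (1 - ψ) ^ (n - y) ≠ 0 :=
  mul_ne_zero (mul_ne_zero (Nat.cast_ne_zero.mpr (Nat.choose_ne_zero hy)) (pow_ne_zero _ hψ0))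
    (pow_ne_zero _ (sub_ne_zero.mpr hψ1.symm))

lemma lmbdWeight_ne_zero {n y : ℕ} {ω : ℝ} (hy : y ≤ n) (hψ0 : ψ ≠ 0) (hψ1 : ψ ≠ 1)
    (hω : ω ≠ 0) : lmbdWeight n ψ ω y ≠ 0 :=
  mul_ne_zero (choose_mul_pow_mul_pow_ne_zero hy hψ0 hψ1) (pow_ne_zero _ hω)

lemma isLittleO_lmbdWeight_center {y : ℕ} (hψ0 : ψ ≠ 0) (hψ1 : ψ ≠ 1) (hy : y ≤ 2 * m)
    (hym : y ≠ m) :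
    (fun ω => lmbdWeight (2 * m) ψ ω y) =o[atTop] fun ω => lmbdWeight (2 * m) ψ ω m := by
  have hexp : (2 * m - y) * y < (2 * m - m) * m := by
    simpa only [two_mul, Nat.add_sub_cancel] using two_mul_sub_mul_lt_mul_self hy hym
  have hcenter : ((2 * m).choose m : ℝ) * ψ ^ m * (1 - ψ) ^ (2 * m - m) ≠ 0 :=
    choose_mul_pow_mul_pow_ne_zero (by lia) hψ0 hψ1
  exact ((isLittleO_pow_pow_atTop_of_lt hexp).const_mul_left _).const_mul_right hcenter

theorem tendsto_sum_mul_lmbd_two_mul (hψ0 : ψ ≠ 0) (hψ1 : ψ ≠ 1) {f : ℕ → ℝ → ℝ} {c : ℕ → ℝ}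
    (hf : ∀ y ∈ range (2 * m + 1), Tendsto (f y) atTop (𝓝 (c y))) :
    Tendsto (fun ω => ∑ y ∈ range (2 * m + 1), f y ω * lmbd (2 * m) ψ ω y) atTop (𝓝 (c m)) := by
  simp only [fun ω => sum_mul_lmbd_eq_centerMass (2 * m) ψ ω (f · ω)]
  refine tendsto_centerMass_of_isLittleO (w := fun y ω => lmbdWeight (2 * m) ψ ω y)
    (mem_range.mpr (by lia)) (fun y hy hym => ?_) ?_ hf
  · exact isLittleO_lmbdWeight_center hψ0 hψ1 (mem_range_succ_iff.mp hy) hym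
  · filter_upwards [eventually_ne_atTop 0] with ω hω
    exact lmbdWeight_ne_zero (by lia) hψ0 hψ1 hω

theorem tendsto_lmbdMean_two_mul (hψ0 : ψ ≠ 0) (hψ1 : ψ ≠ 1) :
    Tendsto (fun ω => lmbdMean (2 * m) ψ ω) atTop (𝓝 (m : ℝ)) :=
  tendsto_sum_mul_lmbd_two_mul (c := fun y => (y : ℝ)) hψ0 hψ1 fun _ _ => tendsto_const_nhds

theorem tendsto_lmbdVar_two_mul (hψ0 : ψ ≠ 0) (hψ1 : ψ ≠ 1) :
    Tendsto (fun ω => lmbdVar (2 * m) ψ ω) atTop (𝓝 0) := by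
  have hsq (y : ℕ) : Tendsto (fun ω => ((y : ℝ) - lmbdMean (2 * m) ψ ω) ^ 2) atTop
      (𝓝 (((y : ℝ) - m) ^ 2)) :=
    ((tendsto_lmbdMean_two_mul hψ0 hψ1).const_sub _).pow 2
  have hvar := tendsto_sum_mul_lmbd_two_mul (m := m) hψ0 hψ1 fun y _ => hsq y
  rwa [sub_self, zero_pow two_ne_zero] at hvar

/-- For `ψ` outside `[0, 1]` the masses are signed, but `K n 0 ψ ω` is still nonzero for all large
`ω`, so the limits do not come from division by zero. -/
theorem stmt_10_general {n : ℕ} (hne : Even n) (hψ0 : ψ ≠ 0) (hψ1 : ψ ≠ 1) :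
    Tendsto (fun ω => lmbdMean n ψ ω) atTop (𝓝 ((n : ℝ) / 2)) ∧
      Tendsto (fun ω => lmbdVar n ψ ω) atTop (𝓝 0) := by
  obtain ⟨m, rfl⟩ := hne.two_dvd
  have hhalf : ((2 * m : ℕ) : ℝ) / 2 = m := by
    rw [Nat.cast_mul, Nat.cast_ofNat, mul_div_cancel_left₀ _ two_ne_zero]
  rw [hhalf]
  exact ⟨tendsto_lmbdMean_two_mul hψ0 hψ1, tendsto_lmbdVar_two_mul hψ0 hψ1⟩

end LMBD

theorem stmt_10 (n : ℕ) (hn : 2 ≤ n) (hne : Even n)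
    (ψ : ℝ) (hψ0 : 0 < ψ) (hψ1 : ψ < 1) :
    Filter.Tendsto (fun ω : ℝ => lmbdMean n ψ ω) Filter.atTop (nhds ((n : ℝ) / 2)) ∧
    Filter.Tendsto (fun ω : ℝ => lmbdVar n ψ ω) Filter.atTop (nhds 0) :=
  stmt_10_general hne hψ0.ne' hψ1.ne
end

section
/- Let n ≥ 2 be an integer, let ψ be a real with 1/2 < ψ < 1 and let ω be a real with ω > 1. Then K_{n,1}(ψ,ω) < K_{n,0}(ψ,ω), i.e. τ_1(ψ,ω) < 1; consequently the individual success probability π = ψ τ_1(ψ,ω) satisfies π < ψ. -/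
open Filter Finset

/-!
Conditioning on the outcome of one trial, and exchanging successes with failures in the second term,
`K_{n,0}(ψ) = ψ K_{n,1}(ψ) + (1 - ψ) K_{n,1}(1 - ψ)`, so it is enough that
`K_{n,1}(ψ) < K_{n,1}(1 - ψ)`. Pair the terms with `i` successes and with `j = n - 1 - i` successes.
If `i < j`, the exponent `j (i + 1)` of `ω` exceeds `i (j + 1)`, whereas `ψ > 1 - ψ` gives
`ψ ^ i (1 - ψ) ^ j ≤ ψ ^ j (1 - ψ) ^ i`; the rearrangement inequality compares the two pairs.
-/

section OrderedRing

variable {R : Type*} [CommRing R] [LinearOrder R] [IsStrictOrderedRing R] {x y : R}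

theorem pow_mul_pow_le_pow_mul_pow_of_le (hy : 0 ≤ y) (hyx : y ≤ x) {i j : ℕ} (hij : i ≤ j) :
    x ^ i * y ^ j ≤ x ^ j * y ^ i := by
  obtain ⟨d, rfl⟩ := Nat.exists_eq_add_of_le hij
  have hx : 0 ≤ x := hy.trans hyx
  calc x ^ i * y ^ (i + d) = x ^ i * y ^ i * y ^ d := by ring
    _ ≤ x ^ i * y ^ i * x ^ d := by gcongr
    _ = x ^ (i + d) * y ^ i := by ring

theorem mul_pow_mul_pow_add_swap_le (hy : 0 ≤ y) (hyx : y ≤ x) {i j : ℕ} {a b : R}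
    (hij : i ≤ j) (hba : b ≤ a) :
    a * (x ^ i * y ^ j) + b * (x ^ j * y ^ i) ≤ a * (y ^ i * x ^ j) + b * (y ^ j * x ^ i) := by
  have hpow := pow_mul_pow_le_pow_mul_pow_of_le hy hyx hij
  linarith [mul_add_mul_le_mul_add_mul hba hpow, mul_comm (y ^ i) (x ^ j),
    mul_comm (y ^ j) (x ^ i)]

theorem sum_antidiagonal_mul_pow_mul_pow_lt_swap (hy : 0 ≤ y) (hyx : y < x) {m : ℕ}
    {w : ℕ → ℕ → R} (hw : ∀ i j, i + j = m → i < j → w j i ≤ w i j) (hw₀ : w m 0 < w 0 m) :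
    ∑ p ∈ antidiagonal m, w p.1 p.2 * (x ^ p.1 * y ^ p.2) <
      ∑ p ∈ antidiagonal m, w p.1 p.2 * (y ^ p.1 * x ^ p.2) := by
  set f : ℕ × ℕ → R := fun p => w p.1 p.2 * (x ^ p.1 * y ^ p.2) with hf
  set g : ℕ × ℕ → R := fun p => w p.1 p.2 * (y ^ p.1 * x ^ p.2) with hg
  have pair_le : ∀ p ∈ antidiagonal m, f p + f p.swap ≤ g p + g p.swap := by
    rintro ⟨i, j⟩ hp
    have hm : i + j = m := mem_antidiagonal.mp hp
    rcases lt_trichotomy i j with hij | rfl | hji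
    · exact mul_pow_mul_pow_add_swap_le hy hyx.le hij.le (hw i j hm hij)
    · exact mul_pow_mul_pow_add_swap_le hy hyx.le le_rfl le_rfl
    · rw [add_comm (f _), add_comm (g _)]
      exact mul_pow_mul_pow_add_swap_le hy hyx.le hji.le (hw j i (by lia) hji)
  have extreme_pair_lt : f (0, m) + f (m, 0) < g (0, m) + g (m, 0) := by
    have hm : m ≠ 0 := by rintro rfl; exact hw₀.false
    have hpow : y ^ m < x ^ m := pow_lt_pow_left₀ hyx hy hm
    simp only [hf, hg, pow_zero, one_mul, mul_one]
    linarith [mul_add_mul_lt_mul_add_mul hw₀ hpow]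
  have sum_pair_lt : ∑ p ∈ antidiagonal m, (f p + f p.swap) <
      ∑ p ∈ antidiagonal m, (g p + g p.swap) :=
    sum_lt_sum pair_le ⟨(0, m), by simp, extreme_pair_lt⟩
  simp only [sum_add_distrib, Nat.sum_antidiagonal_swap] at sum_pair_lt
  linarith

end OrderedRing

theorem K_eq_sum_antidiagonal (n a : ℕ) (ψ ω : ℝ) :
    K n a ψ ω = ∑ p ∈ antidiagonal (n - a),
      ((n - a).choose p.1 : ℝ) * ω ^ (p.2 * (p.1 + a)) * (ψ ^ p.1 * (1 - ψ) ^ p.2) := by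
  rw [K, Nat.sum_antidiagonal_eq_sum_range_succ_mk]
  exact sum_congr rfl fun i _ => by ring

theorem K_succ_zero (n : ℕ) (ψ ω : ℝ) :
    K (n + 1) 0 ψ ω = ψ * K (n + 1) 1 ψ ω + (1 - ψ) * K (n + 1) 1 (1 - ψ) ω := by
  have pascal := sum_antidiagonal_choose_succ_mul (R := ℝ)
    (fun i j => ω ^ (j * i) * (ψ ^ i * (1 - ψ) ^ j)) n
  simp only [K_eq_sum_antidiagonal, Nat.sub_zero, Nat.add_sub_cancel, add_zero, mul_assoc,
    sub_sub_cancel] at pascal ⊢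
  rw [pascal, add_comm, mul_sum, mul_sum]
  congr 1
  · refine sum_congr rfl fun p hp => ?_
    rw [← Nat.choose_symm_of_eq_add (mem_antidiagonal.mp hp).symm]
    ring
  · rw [← Nat.sum_antidiagonal_swap]
    refine sum_congr rfl fun p hp => ?_
    rw [Prod.fst_swap, Prod.snd_swap, ← Nat.choose_symm_of_eq_add (mem_antidiagonal.mp hp).symm]
    ring

theorem K_one_lt_K_one_one_sub {n : ℕ} (hn : 2 ≤ n) {ψ ω : ℝ} (hψ0 : 1 / 2 < ψ) (hψ1 : ψ ≤ 1)
    (hω : 1 < ω) : K n 1 ψ ω < K n 1 (1 - ψ) ω := by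
  simp only [K_eq_sum_antidiagonal, sub_sub_cancel]
  refine sum_antidiagonal_mul_pow_mul_pow_lt_swap (sub_nonneg.mpr hψ1) (by linarith)
    (w := fun i j => ((n - 1).choose i : ℝ) * ω ^ (j * (i + 1))) (fun i j hm hij => ?_) ?_
  · have hexp : i * (j + 1) ≤ j * (i + 1) := by linarith
    rw [Nat.choose_symm_of_eq_add hm.symm]
    gcongr
    exact hω.le
  · simpa using one_lt_pow₀ hω (show n - 1 ≠ 0 by lia)

theorem K_one_lt_K_zero {n : ℕ} (hn : 2 ≤ n) {ψ ω : ℝ} (hψ0 : 1 / 2 < ψ) (hψ1 : ψ < 1)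
    (hω : 1 < ω) : K n 1 ψ ω < K n 0 ψ ω := by
  have : 0 < 1 - ψ := sub_pos.mpr hψ1
  have hswap := K_one_lt_K_one_one_sub hn hψ0 hψ1.le hω
  obtain ⟨m, rfl⟩ := Nat.exists_eq_add_of_le' (one_le_two.trans hn)
  calc K (m + 1) 1 ψ ω = ψ * K (m + 1) 1 ψ ω + (1 - ψ) * K (m + 1) 1 ψ ω := by ring
    _ < ψ * K (m + 1) 1 ψ ω + (1 - ψ) * K (m + 1) 1 (1 - ψ) ω := by gcongr
    _ = K (m + 1) 0 ψ ω := (K_succ_zero m ψ ω).symm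

theorem stmt_16 (n : ℕ) (hn : 2 ≤ n) (ψ : ℝ) (hψ0 : 1 / 2 < ψ) (hψ1 : ψ < 1)
    (ω : ℝ) (hω : 1 < ω) :
    K n 1 ψ ω < K n 0 ψ ω ∧ τ n 1 ψ ω < 1 ∧ ψ * τ n 1 ψ ω < ψ := by
  have hψ : 0 < ψ := one_half_pos.trans hψ0
  have hK : K n 1 ψ ω < K n 0 ψ ω := K_one_lt_K_zero hn hψ0 hψ1 hω
  have hτ : τ n 1 ψ ω < 1 :=
    (div_lt_one (K_pos n 0 hψ hψ1 (one_pos.trans hω))).mpr hK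
  exact ⟨hK, hτ, mul_lt_of_lt_one_right hψ hτ⟩
end

section
/- For an integer n ≥ 1, regard D_n = K_{n,1} − K_{n,0} as a polynomial in the two variables ψ and ω with real (or rational) coefficients, where K_{n,a} = Σ_{i=0}^{n−a} C(n−a,i) ψ^i (1−ψ)^{n−a−i} ω^{(n−a−i)(i+a)}. Then the polynomial (ψ−1)(2ψ−1)(ω−1) divides D_n; moreover, if n is odd, the polynomial (ψ−1)(2ψ−1)(ω−1)(ω+1) divides D_n. -/
open MvPolynomial

/-- The bivariate polynomial `K_{n,a}` in the variables `ψ = X 0` and `ω = X 1`. -/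
noncomputable def Kpoly (n a : ℕ) : MvPolynomial (Fin 2) ℚ :=
  ∑ i ∈ Finset.range (n - a + 1),
    (Nat.choose (n - a) i : MvPolynomial (Fin 2) ℚ) * (X 0) ^ i *
      (1 - X 0) ^ (n - a - i) * (X 1) ^ ((n - a - i) * (i + a))

/-- `D_n = K_{n,1} − K_{n,0}` as a bivariate polynomial. -/
noncomputable def Dpoly (n : ℕ) : MvPolynomial (Fin 2) ℚ := Kpoly n 1 - Kpoly n 0

/-!
Pascal's rule gives `D_{m+1} = (1 - ψ) ∑_{i+j=m} C(m,i) ψ^i (1-ψ)^j (ω^{j(i+1)} - ω^{i(j+1)})`.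
Exchanging `i` and `j` negates the last factor, so the terms of `(i, j)` and `(j, i)` add up to a
multiple of `ψ^i (1-ψ)^j - ψ^j (1-ψ)^i`, hence of `ψ - (1 - ψ) = 2ψ - 1`, while the diagonal term
vanishes. The two exponents of `ω` differ by `j - i`, which is even when `m` is even; this is where
`ω - 1`, and `ω ^ 2 - 1` for odd `n = m + 1`, come from.
-/

section CommRing

open Finset

variable {R : Type*} [CommRing R]

lemma dvd_sum_of_involution {ι : Type*} {s : Finset ι} {f : ι → R} {c : R} (g : ι → ι)
    (g_mem : ∀ x ∈ s, g x ∈ s) (g_g : ∀ x ∈ s, g (g x) = x)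
    (hpair : ∀ x ∈ s, c ∣ f x + f (g x)) (hfixed : ∀ x ∈ s, g x = x → c ∣ f x) :
    c ∣ ∑ x ∈ s, f x := by
  simp only [← Ideal.Quotient.eq_zero_iff_dvd, map_add, map_sum] at hpair hfixed ⊢
  exact sum_involution (fun x _ => g x) hpair (fun x hx => mt (hfixed x hx)) g_mem g_g

lemma pow_sub_one_dvd_pow_sub_pow_of_modEq (w : R) {d p q : ℕ} (h : p ≡ q [MOD d]) :
    w ^ d - 1 ∣ w ^ p - w ^ q := by
  have hone : Ideal.Quotient.mk (Ideal.span {w ^ d - 1}) w ^ d = 1 := by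
    rw [← sub_eq_zero, ← map_pow, ← map_one (Ideal.Quotient.mk _), ← map_sub,
      Ideal.Quotient.mk_singleton_self]
  rw [← Ideal.Quotient.eq_zero_iff_dvd, map_sub, map_pow, map_pow, sub_eq_zero]
  exact pow_eq_pow_of_modEq h hone

lemma sub_dvd_pow_mul_pow_sub_pow_mul_pow (a b : R) (i j : ℕ) :
    a - b ∣ a ^ i * b ^ j - a ^ j * b ^ i := by
  rw [show a ^ i * b ^ j - a ^ j * b ^ i =
    (a ^ i - b ^ i) * b ^ j - (a ^ j - b ^ j) * b ^ i by ring]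
  exact dvd_sub ((sub_dvd_pow_sub_pow a b i).mul_right _)
    ((sub_dvd_pow_sub_pow a b j).mul_right _)

lemma sub_mul_dvd_sum_antidiagonal_choose_of_alternating (a b : R) {c : R} {m : ℕ}
    {e : ℕ → ℕ → R} (hswap : ∀ i j, e j i = -e i j) (hdiag : ∀ i, e i i = 0)
    (hdvd : ∀ i j, i + j = m → c ∣ e i j) :
    (a - b) * c ∣ ∑ p ∈ antidiagonal m, (m.choose p.1 : R) * (a ^ p.1 * b ^ p.2 * e p.1 p.2) := by
  refine dvd_sum_of_involution Prod.swap (fun _ => HasAntidiagonal.swap_mem_antidiagonal.mpr)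
    (fun p _ => p.swap_swap) ?_ ?_
  · rintro ⟨i, j⟩ hij
    rw [HasAntidiagonal.mem_antidiagonal] at hij
    have hpair : (m.choose i : R) * (a ^ i * b ^ j * e i j) +
        m.choose j * (a ^ j * b ^ i * e j i) =
        m.choose i * ((a ^ i * b ^ j - a ^ j * b ^ i) * e i j) := by
      rw [Nat.choose_symm_of_eq_add hij.symm, hswap i j]
      ring
    exact hpair ▸
      (mul_dvd_mul (sub_dvd_pow_mul_pow_sub_pow_mul_pow a b i j) (hdvd i j hij)).mul_left _
  · rintro ⟨i, j⟩ - hfixed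
    obtain rfl : j = i := congrArg Prod.fst hfixed
    simp [hdiag]

/-- The polynomial `K_{n,a}` evaluated at elements `ψ` and `ω` of a commutative ring. As in `Kpoly`,
the subtraction `n - a` is truncated, so the value is meaningful only for `a ≤ n`. -/
def evalK (ψ ω : R) (n a : ℕ) : R :=
  ∑ i ∈ range (n - a + 1),
    (Nat.choose (n - a) i : R) * ψ ^ i * (1 - ψ) ^ (n - a - i) * ω ^ ((n - a - i) * (i + a))

lemma evalK_add_right (ψ ω : R) (m a : ℕ) :
    evalK ψ ω (m + a) a = ∑ p ∈ antidiagonal m,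
      (m.choose p.1 : R) * (ψ ^ p.1 * (1 - ψ) ^ p.2 * ω ^ (p.2 * (p.1 + a))) := by
  rw [Nat.sum_antidiagonal_eq_sum_range_succ_mk, evalK, Nat.add_sub_cancel]
  simp only [mul_assoc]

lemma evalK_succ_one_sub_evalK_succ_zero (ψ ω : R) (m : ℕ) :
    evalK ψ ω (m + 1) 1 - evalK ψ ω (m + 1) 0 = (1 - ψ) * ∑ p ∈ antidiagonal m,
      (m.choose p.1 : R) *
        (ψ ^ p.1 * (1 - ψ) ^ p.2 * (ω ^ (p.2 * (p.1 + 1)) - ω ^ (p.1 * (p.2 + 1)))) := by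
  have hpascal := sum_antidiagonal_choose_succ_mul
    (fun i j => ψ ^ i * (1 - ψ) ^ j * ω ^ (j * (i + 0))) m
  rw [evalK_add_right, evalK_add_right ψ ω (m + 1) 0, hpascal, ← sum_add_distrib,
    ← sum_sub_distrib, mul_sum]
  refine sum_congr rfl fun p hp => ?_
  rw [← Nat.choose_symm_of_eq_add (HasAntidiagonal.mem_antidiagonal.mp hp).symm]
  ring

lemma mul_pow_sub_one_dvd_evalK_succ_sub (ψ ω : R) {m d : ℕ}
    (hd : ∀ i j, i + j = m → j ≡ i [MOD d]) :
    (ψ - 1) * (2 * ψ - 1) * (ω ^ d - 1) ∣ evalK ψ ω (m + 1) 1 - evalK ψ ω (m + 1) 0 := by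
  have hω (i j : ℕ) (hij : i + j = m) :
      ω ^ d - 1 ∣ ω ^ (j * (i + 1)) - ω ^ (i * (j + 1)) := by
    refine pow_sub_one_dvd_pow_sub_pow_of_modEq ω ?_
    rw [mul_add_one, mul_add_one, mul_comm j i]
    exact (hd i j hij).add_left _
  have hsum := sub_mul_dvd_sum_antidiagonal_choose_of_alternating ψ (1 - ψ)
    (fun i j => (neg_sub _ _).symm) (fun i => sub_self _) hω
  rw [evalK_succ_one_sub_evalK_succ_zero, mul_assoc,
    show 2 * ψ - 1 = ψ - (1 - ψ) by ring]
  exact mul_dvd_mul (dvd_sub_comm.mp dvd_rfl) hsum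

theorem stmt_18_general (ψ ω : R) {n : ℕ} (hn : 1 ≤ n) :
    (ψ - 1) * (2 * ψ - 1) * (ω - 1) ∣ evalK ψ ω n 1 - evalK ψ ω n 0 ∧
    (Odd n →
      (ψ - 1) * (2 * ψ - 1) * (ω - 1) * (ω + 1) ∣ evalK ψ ω n 1 - evalK ψ ω n 0) := by
  obtain ⟨m, rfl⟩ := Nat.exists_eq_add_of_le' hn
  refine ⟨?_, fun hodd => ?_⟩
  · simpa only [pow_one] using
      mul_pow_sub_one_dvd_evalK_succ_sub ψ ω (d := 1) fun _ _ _ => Nat.modEq_one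
  · have hparity (i j : ℕ) (hij : i + j = m) : j ≡ i [MOD 2] := by
      obtain ⟨k, hk⟩ := hodd
      rw [Nat.ModEq]
      omega
    rw [mul_assoc, show (ω - 1) * (ω + 1) = ω ^ 2 - 1 by ring]
    exact mul_pow_sub_one_dvd_evalK_succ_sub ψ ω hparity

end CommRing

theorem stmt_18 (n : ℕ) (hn : 1 ≤ n) :
    ((X 0 - 1) * (2 * X 0 - 1) * (X 1 - 1) : MvPolynomial (Fin 2) ℚ) ∣ Dpoly n ∧
    (Odd n →
      ((X 0 - 1) * (2 * X 0 - 1) * (X 1 - 1) * (X 1 + 1) : MvPolynomial (Fin 2) ℚ) ∣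
        Dpoly n) :=
  stmt_18_general (X 0) (X 1) hn
end
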